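/- arXiv:2310.08015 — 4 statements merged into one kernel-verified Lean document; each statement's English description precedes it below -/
import Mathlib

section
/- Let P0 and P1 be probability measures on a measurable space X, both absolutely continuous with respect to μ = P0 + P1 with densities p0 and p1. Define the soft log-likelihood-ratio acceptance probability g : X → [0,1] by g(o) = √(p0(o)) / (√(p0(o)) + √(p1(o))) when p0(o) + p1(o) > 0 (and g(o) = 0 otherwise). Then the advantage of the soft LLR test with a single sample equals the squared Hellinger distance: ∫ g dP0 − ∫ g dP1 = H²(P0, P1). -/
open MeasureTheory

/-!
Write `s = √p₀ / (√p₀ + √p₁)`. Factoring `p₀ - p₁ = (√p₀ - √p₁) (√p₀ + √p₁)` gives the pointwise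
identity `(p₀ - p₁) s = (√p₀ - √p₁) √p₀ = p₀ - √(p₀ p₁)`. Integrating it against a dominating
measure turns the left side into the advantage of the test `s` and the right side into one minus
the Hellinger affinity.
-/

/-- The acceptance probability of the soft log-likelihood-ratio test at an observation where the two
densities take the values `a` and `b`. Where both vanish, `0 / 0 = 0` gives the value `0` prescribed
for the test. -/
noncomputable def softLLR (a b : ℝ) : ℝ := √a / (√a + √b)

lemma softLLR_eq_ite {a b : ℝ} (ha : 0 ≤ a) (hb : 0 ≤ b) :
    softLLR a b = if 0 < a + b then √a / (√a + √b) else 0 := by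
  split_ifs with hab
  · rfl
  · have ha0 : a = 0 := by linarith
    simp [softLLR, ha0]

lemma softLLR_nonneg (a b : ℝ) : 0 ≤ softLLR a b := by
  unfold softLLR
  positivity

lemma softLLR_le_one (a b : ℝ) : softLLR a b ≤ 1 :=
  div_le_one_of_le₀ (le_add_of_nonneg_right b.sqrt_nonneg) (by positivity)

lemma sub_mul_softLLR {a b : ℝ} (ha : 0 ≤ a) (hb : 0 ≤ b) :
    (a - b) * softLLR a b = a - √(a * b) := by
  have cancel : (√a + √b) * softLLR a b = √a :=
    mul_div_cancel_of_imp' fun h => by linarith [a.sqrt_nonneg, b.sqrt_nonneg]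
  calc (a - b) * softLLR a b
      = (√a * √a - √b * √b) * softLLR a b := by rw [Real.mul_self_sqrt ha, Real.mul_self_sqrt hb]
    _ = (√a - √b) * ((√a + √b) * softLLR a b) := by ring
    _ = √a * √a - √a * √b := by rw [cancel]; ring
    _ = a - √(a * b) := by rw [Real.mul_self_sqrt ha, Real.sqrt_mul ha]

section Density

variable {X : Type*} [MeasurableSpace X] {μ : Measure X} {p : X → ℝ}

section Vector

variable {E : Type*} [NormedAddCommGroup E] [NormedSpace ℝ E]

lemma integral_withDensity_ofReal (hpm : AEMeasurable p μ) (hp : 0 ≤ᵐ[μ] p) (f : X → E) :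
    ∫ x, f x ∂μ.withDensity (fun x => ENNReal.ofReal (p x)) = ∫ x, p x • f x ∂μ := by
  rw [integral_withDensity_eq_integral_toReal_smul₀ hpm.ennreal_ofReal (by simp)]
  refine integral_congr_ae ?_
  filter_upwards [hp] with x hx
  rw [ENNReal.toReal_ofReal hx]

lemma integrable_withDensity_ofReal_iff (hpm : AEMeasurable p μ) (hp : 0 ≤ᵐ[μ] p) {f : X → E} :
    Integrable f (μ.withDensity fun x => ENNReal.ofReal (p x)) ↔
      Integrable (fun x => p x • f x) μ := by
  rw [integrable_withDensity_iff_integrable_smul₀' hpm.ennreal_ofReal (by simp)]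
  refine integrable_congr ?_
  filter_upwards [hp] with x hx
  rw [ENNReal.toReal_ofReal hx]

end Vector

lemma integral_eq_measureReal_univ_withDensity_ofReal (hpm : AEMeasurable p μ) (hp : 0 ≤ᵐ[μ] p) :
    ∫ x, p x ∂μ = (μ.withDensity fun x => ENNReal.ofReal (p x)).real Set.univ := by
  simpa using (integral_withDensity_ofReal hpm hp fun _ => (1 : ℝ)).symm

lemma integrable_of_isFiniteMeasure_withDensity_ofReal
    [IsFiniteMeasure (μ.withDensity fun x => ENNReal.ofReal (p x))]
    (hpm : AEMeasurable p μ) (hp : 0 ≤ᵐ[μ] p) : Integrable p μ := by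
  simpa using (integrable_withDensity_ofReal_iff hpm hp).1 (integrable_const (1 : ℝ))

end Density

lemma integrable_softLLR {X : Type*} [MeasurableSpace X] {P : Measure X} [IsFiniteMeasure P]
    {p q : X → ℝ} (hp : AEMeasurable p P) (hq : AEMeasurable q P) :
    Integrable (fun x => softLLR (p x) (q x)) P := by
  have hmeas : AEMeasurable (fun x => softLLR (p x) (q x)) P := by
    unfold softLLR
    fun_prop
  refine .of_bound hmeas.aestronglyMeasurable 1 (.of_forall fun x => ?_)
  rw [Real.norm_of_nonneg (softLLR_nonneg _ _)]
  exact softLLR_le_one _ _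

lemma integrable_mul_softLLR {X : Type*} [MeasurableSpace X] {μ : Measure X} {r p q : X → ℝ}
    [IsFiniteMeasure (μ.withDensity fun x => ENNReal.ofReal (r x))]
    (hrm : AEMeasurable r μ) (hr : 0 ≤ᵐ[μ] r) (hp : AEMeasurable p μ) (hq : AEMeasurable q μ) :
    Integrable (fun x => r x * softLLR (p x) (q x)) μ :=
  have hac := withDensity_absolutelyContinuous μ fun x => ENNReal.ofReal (r x)
  (integrable_withDensity_ofReal_iff hrm hr).1
    (integrable_softLLR (hp.mono_ac hac) (hq.mono_ac hac))

theorem soft_llr_advantage_eq_sq_hellinger_general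
    {X : Type*} [MeasurableSpace X] {μ P0 P1 : Measure X} [IsFiniteMeasure P0] [IsFiniteMeasure P1]
    {p0 p1 : X → ℝ} (hp0m : AEMeasurable p0 μ) (hp1m : AEMeasurable p1 μ)
    (hp0 : 0 ≤ᵐ[μ] p0) (hp1 : 0 ≤ᵐ[μ] p1)
    (hP0 : P0 = μ.withDensity (fun x => ENNReal.ofReal (p0 x)))
    (hP1 : P1 = μ.withDensity (fun x => ENNReal.ofReal (p1 x))) :
    ∫ x, softLLR (p0 x) (p1 x) ∂P0 - ∫ x, softLLR (p0 x) (p1 x) ∂P1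
      = P0.real Set.univ - ∫ x, √(p0 x * p1 x) ∂μ := by
  subst hP0 hP1
  have h0 := integrable_mul_softLLR hp0m hp0 hp0m hp1m
  have h1 := integrable_mul_softLLR hp1m hp1 hp0m hp1m
  rw [eq_sub_iff_add_eq, ← eq_sub_iff_add_eq']
  calc ∫ x, √(p0 x * p1 x) ∂μ
      = ∫ x, (p0 x - (p0 x * softLLR (p0 x) (p1 x) - p1 x * softLLR (p0 x) (p1 x))) ∂μ := by
        refine integral_congr_ae ?_
        filter_upwards [hp0, hp1] with x hx0 hx1
        rw [← sub_mul, sub_mul_softLLR hx0 hx1, sub_sub_cancel]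
    _ = ∫ x, p0 x ∂μ - (∫ x, p0 x * softLLR (p0 x) (p1 x) ∂μ
          - ∫ x, p1 x * softLLR (p0 x) (p1 x) ∂μ) := by
        rw [integral_sub (integrable_of_isFiniteMeasure_withDensity_ofReal hp0m hp0) (h0.sub' h1),
          integral_sub h0 h1]
    _ = (μ.withDensity fun x => ENNReal.ofReal (p0 x)).real Set.univ
          - (∫ x, softLLR (p0 x) (p1 x) ∂μ.withDensity (fun x => ENNReal.ofReal (p0 x))
          - ∫ x, softLLR (p0 x) (p1 x) ∂μ.withDensity (fun x => ENNReal.ofReal (p1 x))) := by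
        simp only [integral_eq_measureReal_univ_withDensity_ofReal hp0m hp0,
          integral_withDensity_ofReal hp0m hp0, integral_withDensity_ofReal hp1m hp1, smul_eq_mul]

/-- The squared Hellinger advantage identity for the soft log-likelihood-ratio test. -/
theorem soft_llr_advantage_eq_sq_hellinger
    {X : Type*} [MeasurableSpace X]
    (P0 P1 : Measure X) [IsProbabilityMeasure P0] [IsProbabilityMeasure P1]
    (p0 p1 : X → ℝ) (hp0m : Measurable p0) (hp1m : Measurable p1)
    (hp0 : ∀ x, 0 ≤ p0 x) (hp1 : ∀ x, 0 ≤ p1 x)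
    (hP0 : P0 = (P0 + P1).withDensity (fun x => ENNReal.ofReal (p0 x)))
    (hP1 : P1 = (P0 + P1).withDensity (fun x => ENNReal.ofReal (p1 x)))
    (g : X → ℝ)
    (hg : ∀ o, g o =
      if 0 < p0 o + p1 o then Real.sqrt (p0 o) / (Real.sqrt (p0 o) + Real.sqrt (p1 o)) else 0) :
    ∫ o, g o ∂P0 - ∫ o, g o ∂P1
      = 1 - ∫ x, Real.sqrt (p0 x * p1 x) ∂(P0 + P1) := by
  simp only [hg, ← softLLR_eq_ite (hp0 _) (hp1 _)]
  rw [soft_llr_advantage_eq_sq_hellinger_general hp0m.aemeasurable hp1m.aemeasurable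
    (.of_forall hp0) (.of_forall hp1) hP0 hP1, probReal_univ]
end

section
/- For any two probability measures P0 and P1 on a measurable space X, there exists a measurable function A : X → [0,1] such that ∫ A dP0 − ∫ A dP1 = H²(P0, P1). In particular, the supremum over all measurable A : X → [0,1] of ∫ A dP0 − ∫ A dP1 is at least H²(P0, P1); that is, a membership-inference adversary whose single observation is distributed according to P0 (sample absent) or P1 (sample present) and who uses the soft log-likelihood-ratio test achieves membership-inference advantage at least H²(P0, P1). -/
open MeasureTheory

/-- The squared Hellinger distance between two measures, computed with respect to the
dominating measure `P + Q`. -/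
noncomputable def sqHellinger {X : Type*} [MeasurableSpace X] (P Q : Measure X) : ℝ :=
  1 - ∫ x, Real.sqrt ((P.rnDeriv (P + Q) x).toReal * (Q.rnDeriv (P + Q) x).toReal) ∂(P + Q)

/-!
Write `p, q` for the densities of `P, Q` with respect to `μ`. The test `A = √p / (√p + √q)` turns
the factorization `p - q = (√p - √q) (√p + √q)` into `(p - q) A = p - √(p q)`, and integrating
against `μ` gives `∫ A ∂P - ∫ A ∂Q = P(X) - ∫ √(p q) ∂μ`.
-/

theorem sqrt_div_sqrt_add_sqrt_mem_Icc (a b : ℝ) : √a / (√a + √b) ∈ Set.Icc (0 : ℝ) 1 :=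
  ⟨by positivity, div_le_one_of_le₀ (le_add_of_nonneg_right b.sqrt_nonneg) (by positivity)⟩

theorem sub_mul_sqrt_div_sqrt_add_sqrt {a b : ℝ} (ha : 0 ≤ a) (hb : 0 ≤ b) :
    (a - b) * (√a / (√a + √b)) = a - √(a * b) := by
  rcases ha.eq_or_lt with rfl | ha_pos
  · simp
  have hne : √a + √b ≠ 0 := by positivity
  calc (a - b) * (√a / (√a + √b))
      = (√a ^ 2 - √b ^ 2) * (√a / (√a + √b)) := by rw [Real.sq_sqrt ha, Real.sq_sqrt hb]
    _ = (√a - √b) * ((√a + √b) * (√a / (√a + √b))) := by ring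
    _ = (√a - √b) * √a := by rw [mul_div_cancel₀ _ hne]
    _ = √a ^ 2 - √a * √b := by ring
    _ = a - √(a * b) := by rw [Real.sq_sqrt ha, Real.sqrt_mul ha]

section

variable {X : Type*} [MeasurableSpace X] (P Q μ : Measure X)

/-- The soft log-likelihood-ratio test between `P` and `Q`, in terms of their densities `p` and `q`
with respect to `μ`: the logistic function of `log (p / q) / 2`, written as `√p / (√p + √q)` so
that it is also meaningful where exactly one density vanishes (where both do, it is `0`). -/
noncomputable def softLLRTest (x : X) : ℝ :=
  √(P.rnDeriv μ x).toReal / (√(P.rnDeriv μ x).toReal + √(Q.rnDeriv μ x).toReal)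

theorem measurable_softLLRTest : Measurable (softLLRTest P Q μ) := by
  unfold softLLRTest
  fun_prop

theorem softLLRTest_mem_Icc (x : X) : softLLRTest P Q μ x ∈ Set.Icc (0 : ℝ) 1 :=
  sqrt_div_sqrt_add_sqrt_mem_Icc _ _

theorem integrable_softLLRTest (ν : Measure X) [IsFiniteMeasure ν] :
    Integrable (softLLRTest P Q μ) ν :=
  .of_mem_Icc 0 1 (measurable_softLLRTest P Q μ).aemeasurable
    (.of_forall (softLLRTest_mem_Icc P Q μ))

variable {P Q μ}

section

variable {E : Type*} [NormedAddCommGroup E] [NormedSpace ℝ E] [SigmaFinite P] [SigmaFinite Q]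
  [P.HaveLebesgueDecomposition μ] [Q.HaveLebesgueDecomposition μ] {f : X → E}

theorem integrable_rnDeriv_sub_smul (hP : P ≪ μ) (hQ : Q ≪ μ)
    (hfP : Integrable f P) (hfQ : Integrable f Q) :
    Integrable (fun x ↦ ((P.rnDeriv μ x).toReal - (Q.rnDeriv μ x).toReal) • f x) μ := by
  simp only [sub_smul]
  exact ((integrable_rnDeriv_smul_iff hP).2 hfP).sub ((integrable_rnDeriv_smul_iff hQ).2 hfQ)

theorem integral_rnDeriv_sub_smul (hP : P ≪ μ) (hQ : Q ≪ μ)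
    (hfP : Integrable f P) (hfQ : Integrable f Q) :
    ∫ x, ((P.rnDeriv μ x).toReal - (Q.rnDeriv μ x).toReal) • f x ∂μ
      = ∫ x, f x ∂P - ∫ x, f x ∂Q := by
  simp only [sub_smul]
  rw [integral_sub ((integrable_rnDeriv_smul_iff hP).2 hfP)
      ((integrable_rnDeriv_smul_iff hQ).2 hfQ),
    integral_rnDeriv_smul hP, integral_rnDeriv_smul hQ]

end

theorem integral_softLLRTest_sub_integral_softLLRTest [IsFiniteMeasure P] [IsFiniteMeasure Q]
    [SigmaFinite μ] (hP : P ≪ μ) (hQ : Q ≪ μ) :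
    ∫ x, softLLRTest P Q μ x ∂P - ∫ x, softLLRTest P Q μ x ∂Q
      = P.real Set.univ - ∫ x, √((P.rnDeriv μ x).toReal * (Q.rnDeriv μ x).toReal) ∂μ := by
  set p : X → ℝ := fun x ↦ (P.rnDeriv μ x).toReal
  set q : X → ℝ := fun x ↦ (Q.rnDeriv μ x).toReal
  set A : X → ℝ := softLLRTest P Q μ
  have hAP : Integrable A P := integrable_softLLRTest P Q μ P
  have hAQ : Integrable A Q := integrable_softLLRTest P Q μ Q
  have pointwise (x : X) : (p x - q x) * A x = p x - √(p x * q x) :=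
    sub_mul_sqrt_div_sqrt_add_sqrt ENNReal.toReal_nonneg ENNReal.toReal_nonneg
  have affinity : ∫ x, √(p x * q x) ∂μ = P.real Set.univ - (∫ x, A x ∂P - ∫ x, A x ∂Q) :=
    calc ∫ x, √(p x * q x) ∂μ
        = ∫ x, (p x - (p x - q x) * A x) ∂μ := by simp only [pointwise, sub_sub_cancel]
      _ = ∫ x, p x ∂μ - ∫ x, (p x - q x) * A x ∂μ :=
        integral_sub Measure.integrable_toReal_rnDeriv (integrable_rnDeriv_sub_smul hP hQ hAP hAQ)
      _ = P.real Set.univ - (∫ x, A x ∂P - ∫ x, A x ∂Q) :=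
        congrArg₂ (· - ·) (Measure.integral_toReal_rnDeriv hP)
          (integral_rnDeriv_sub_smul hP hQ hAP hAQ)
  rw [affinity, sub_sub_cancel]

theorem integral_sub_integral_le_measureReal_univ [IsFiniteMeasure P] {A : X → ℝ}
    (hA : ∀ x, A x ∈ Set.Icc (0 : ℝ) 1) :
    ∫ x, A x ∂P - ∫ x, A x ∂Q ≤ P.real Set.univ := by
  have hP : ∫ x, A x ∂P ≤ P.real Set.univ := by
    simpa using integral_mono_of_nonneg (.of_forall fun x ↦ (hA x).1) (integrable_const (1 : ℝ))
      (.of_forall fun x ↦ (hA x).2)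
  have hQ : 0 ≤ ∫ x, A x ∂Q := integral_nonneg fun x ↦ (hA x).1
  linarith

theorem exists_test_advantage_eq_sq_hellinger_general [IsFiniteMeasure P] [IsFiniteMeasure Q]
    [SigmaFinite μ] (hP : P ≪ μ) (hQ : Q ≪ μ) :
    (∃ A : X → ℝ, Measurable A ∧ (∀ x, A x ∈ Set.Icc (0 : ℝ) 1) ∧
        ∫ x, A x ∂P - ∫ x, A x ∂Q =
          P.real Set.univ - ∫ x, √((P.rnDeriv μ x).toReal * (Q.rnDeriv μ x).toReal) ∂μ) ∧
      P.real Set.univ - ∫ x, √((P.rnDeriv μ x).toReal * (Q.rnDeriv μ x).toReal) ∂μ ≤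
        sSup {r : ℝ | ∃ A : X → ℝ, Measurable A ∧ (∀ x, A x ∈ Set.Icc (0 : ℝ) 1) ∧
          r = ∫ x, A x ∂P - ∫ x, A x ∂Q} := by
  have hA := measurable_softLLRTest P Q μ
  have hA01 := softLLRTest_mem_Icc P Q μ
  have advantage := integral_softLLRTest_sub_integral_softLLRTest hP hQ
  refine ⟨⟨_, hA, hA01, advantage⟩, le_csSup ⟨P.real Set.univ, ?_⟩ ⟨_, hA, hA01, advantage.symm⟩⟩
  rintro _ ⟨B, -, hB01, rfl⟩
  exact integral_sub_integral_le_measureReal_univ hB01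

end

/-- There is a `[0,1]`-valued (soft LLR) test whose single-sample advantage equals the
squared Hellinger distance; hence the supremum of all advantages is at least `H²(P0,P1)`. -/
theorem exists_test_advantage_eq_sq_hellinger
    {X : Type*} [MeasurableSpace X]
    (P0 P1 : Measure X) [IsProbabilityMeasure P0] [IsProbabilityMeasure P1] :
    (∃ A : X → ℝ, Measurable A ∧ (∀ x, A x ∈ Set.Icc (0 : ℝ) 1) ∧
        ∫ x, A x ∂P0 - ∫ x, A x ∂P1 = sqHellinger P0 P1) ∧
      sqHellinger P0 P1 ≤
        sSup {r : ℝ | ∃ A : X → ℝ, Measurable A ∧ (∀ x, A x ∈ Set.Icc (0 : ℝ) 1) ∧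
          r = ∫ x, A x ∂P0 - ∫ x, A x ∂P1} := by
  have hP0 : P0 ≪ P0 + P1 := (Measure.le_add_right le_rfl).absolutelyContinuous
  have hP1 : P1 ≪ P0 + P1 := (Measure.le_add_left le_rfl).absolutelyContinuous
  simpa only [sqHellinger, probReal_univ] using
    exists_test_advantage_eq_sq_hellinger_general hP0 hP1
end

section
/- For any α ∈ (0,1) and any probability measures P0 ≠ P1 on a measurable space X with h = H²(P0, P1) ∈ (0,1), the optimal sample complexity M_α — the least n such that some measurable test T : X^n → [0,1] achieves advantage ∫ T dP0^⊗n − ∫ T dP1^⊗n ≥ α — satisfies (α²/2) · (1/h) ≤ M_α ≤ ⌈ln(1/(1−α)) / h⌉. In other words, the optimal sample complexity of distinguishing P0 from P1 is Θ(1 / H²(P0, P1)) with constants depending only on α. -/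
open MeasureTheory

/-!
The best advantage `V` of a test between two probability measures satisfies Le Cam's inequalities
`H² ≤ V` and `V² ≤ H² (2 - H²)`: the likelihood ratio test gives the first, the Cauchy–Schwarz
inequality applied to `p - q = (√p - √q) (√p + √q)` the second. The affinity
`1 - H²` is multiplicative over product measures, so `n` samples give `H² = 1 - (1 - h) ^ n`, which
lies between `1 - exp (-n h)` and `n h`.
-/

section SqrtDensity

variable {X : Type*} [MeasurableSpace X] {P Q μ ν : Measure X}

/-- The square root of the density of `P` with respect to `μ`. It embeds the probability measures
dominated by `μ` in `L²(μ)`, where the squared Hellinger distance is half the squared norm distance.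
If `P` is not absolutely continuous with respect to `μ`, its singular part is ignored. -/
noncomputable def sqrtDensity (P μ : Measure X) (x : X) : ℝ :=
  √(P.rnDeriv μ x).toReal

lemma sqrtDensity_nonneg (x : X) : 0 ≤ sqrtDensity P μ x :=
  Real.sqrt_nonneg _

lemma sqrtDensity_sq (x : X) : sqrtDensity P μ x ^ 2 = (P.rnDeriv μ x).toReal :=
  Real.sq_sqrt ENNReal.toReal_nonneg

lemma measurable_sqrtDensity : Measurable (sqrtDensity P μ) :=
  (P.measurable_rnDeriv μ).ennreal_toReal.sqrt

lemma memLp_sqrtDensity [IsFiniteMeasure P] : MemLp (sqrtDensity P μ) 2 μ := by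
  rw [memLp_two_iff_integrable_sq measurable_sqrtDensity.aestronglyMeasurable]
  simpa only [sqrtDensity_sq] using Measure.integrable_toReal_rnDeriv

lemma integrable_sqrtDensity_sq_mul [SigmaFinite P] [SigmaFinite μ] (hP : P ≪ μ) {T : X → ℝ}
    (hT : Integrable T P) : Integrable (fun x => sqrtDensity P μ x ^ 2 * T x) μ := by
  simpa only [sqrtDensity_sq] using (integrable_toReal_rnDeriv_mul_iff hP).mpr hT

lemma integral_sqrtDensity_sq_mul [SigmaFinite P] [SigmaFinite μ] (hP : P ≪ μ) (T : X → ℝ) :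
    ∫ x, sqrtDensity P μ x ^ 2 * T x ∂μ = ∫ x, T x ∂P := by
  simpa only [sqrtDensity_sq] using integral_toReal_rnDeriv_mul hP

lemma integral_sqrtDensity_sq [IsProbabilityMeasure P] [SigmaFinite μ] (hP : P ≪ μ) :
    ∫ x, sqrtDensity P μ x ^ 2 ∂μ = 1 := by
  simpa using integral_sqrtDensity_sq_mul hP fun _ => 1

lemma sqrtDensity_mul_sqrtDensity [SigmaFinite P] [SigmaFinite ν] [SigmaFinite μ] (hP : P ≪ ν) :
    ∀ᵐ x ∂μ, sqrtDensity P ν x * sqrtDensity ν μ x = sqrtDensity P μ x := by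
  filter_upwards [Measure.rnDeriv_mul_rnDeriv (κ := μ) hP] with x hx
  simp only [sqrtDensity, ← hx, Pi.mul_apply, ENNReal.toReal_mul,
    Real.sqrt_mul ENNReal.toReal_nonneg]

end SqrtDensity

section Hellinger

variable {X : Type*} [MeasurableSpace X] {P Q μ : Measure X}

lemma one_sub_sqHellinger_eq_integral : 1 - sqHellinger P Q =
    ∫ x, sqrtDensity P (P + Q) x * sqrtDensity Q (P + Q) x ∂(P + Q) := by
  simp only [sqHellinger, sqrtDensity, sub_sub_cancel, Real.sqrt_mul ENNReal.toReal_nonneg]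

lemma sqHellinger_le_one : sqHellinger P Q ≤ 1 := by
  rw [← sub_nonneg, one_sub_sqHellinger_eq_integral]
  exact integral_nonneg fun x => mul_nonneg (sqrtDensity_nonneg x) (sqrtDensity_nonneg x)

lemma absolutelyContinuous_add_self_left (P Q : Measure X) : P ≪ P + Q :=
  Measure.AbsolutelyContinuous.rfl.add_right Q

lemma absolutelyContinuous_add_self_right (P Q : Measure X) : Q ≪ P + Q :=
  add_comm Q P ▸ absolutelyContinuous_add_self_left Q P

lemma one_sub_sqHellinger_eq_integral_of_ac [SigmaFinite P] [SigmaFinite Q] [SigmaFinite μ]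
    (hP : P ≪ μ) (hQ : Q ≪ μ) :
    1 - sqHellinger P Q = ∫ x, sqrtDensity P μ x * sqrtDensity Q μ x ∂μ := by
  rw [one_sub_sqHellinger_eq_integral, ← integral_sqrtDensity_sq_mul (hP.add_left hQ)]
  refine integral_congr_ae ?_
  filter_upwards [sqrtDensity_mul_sqrtDensity (μ := μ) (absolutelyContinuous_add_self_left P Q),
    sqrtDensity_mul_sqrtDensity (μ := μ) (absolutelyContinuous_add_self_right P Q)] with x hPx hQx
  rw [← hPx, ← hQx]
  ring

end Hellinger

section Pi

variable {ι : Type*} [Fintype ι] {X : ι → Type*} [∀ i, MeasurableSpace (X i)]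
  {P Q μ : ∀ i, Measure (X i)} [∀ i, IsFiniteMeasure (P i)] [∀ i, IsFiniteMeasure (Q i)]
  [∀ i, SigmaFinite (μ i)]

lemma pi_eq_withDensity_prod_rnDeriv (h : ∀ i, P i ≪ μ i) :
    Measure.pi P = (Measure.pi μ).withDensity fun x =>
      ENNReal.ofReal (∏ i, ((P i).rnDeriv (μ i) (x i)).toReal) := by
  refine Measure.pi_eq fun s hs => ?_
  have integrable_prod : Integrable (fun x : ∀ i, X i => ∏ i, ((P i).rnDeriv (μ i) (x i)).toReal)
      (Measure.pi fun i => (μ i).restrict (s i)) :=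
    Integrable.fintype_prod_dep (f := fun i y => ((P i).rnDeriv (μ i) y).toReal)
      fun _ => Measure.integrable_toReal_rnDeriv.restrict
  have prod_nonneg (x : ∀ i, X i) : 0 ≤ ∏ i, ((P i).rnDeriv (μ i) (x i)).toReal :=
    Finset.prod_nonneg fun _ _ => ENNReal.toReal_nonneg
  calc (Measure.pi μ).withDensity
          (fun x => ENNReal.ofReal (∏ i, ((P i).rnDeriv (μ i) (x i)).toReal)) (Set.univ.pi s)
      = ENNReal.ofReal (∫ x, ∏ i, ((P i).rnDeriv (μ i) (x i)).toReal
          ∂(Measure.pi fun i => (μ i).restrict (s i))) := by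
        rw [withDensity_apply _ (MeasurableSet.univ_pi hs), Measure.restrict_pi_pi,
          ofReal_integral_eq_lintegral_ofReal integrable_prod (.of_forall prod_nonneg)]
    _ = ENNReal.ofReal (∏ i, (P i).real (s i)) := by
        rw [integral_fintype_prod_eq_prod fun i y => ((P i).rnDeriv (μ i) y).toReal]
        simp only [Measure.setIntegral_toReal_rnDeriv (h _)]
    _ = ∏ i, P i (s i) := by
        rw [ENNReal.ofReal_prod_of_nonneg fun _ _ => measureReal_nonneg]
        exact Finset.prod_congr rfl fun _ _ => ofReal_measureReal

lemma absolutelyContinuous_pi (h : ∀ i, P i ≪ μ i) : Measure.pi P ≪ Measure.pi μ :=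
  pi_eq_withDensity_prod_rnDeriv h ▸ withDensity_absolutelyContinuous _ _

lemma sqrtDensity_pi (h : ∀ i, P i ≪ μ i) :
    ∀ᵐ x ∂Measure.pi μ,
      sqrtDensity (Measure.pi P) (Measure.pi μ) x = ∏ i, sqrtDensity (P i) (μ i) (x i) := by
  have measurable_density : Measurable fun x : ∀ i, X i =>
      ENNReal.ofReal (∏ i, ((P i).rnDeriv (μ i) (x i)).toReal) := by
    have (i : ι) := (P i).measurable_rnDeriv (μ i)
    fun_prop
  filter_upwards [Measure.rnDeriv_withDensity (Measure.pi μ) measurable_density] with x hx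
  simp only [sqrtDensity]
  rw [pi_eq_withDensity_prod_rnDeriv h, hx,
    ENNReal.toReal_ofReal (Finset.prod_nonneg fun _ _ => ENNReal.toReal_nonneg),
    Real.sqrt_prod _ fun _ _ => ENNReal.toReal_nonneg]

lemma one_sub_sqHellinger_pi :
    1 - sqHellinger (Measure.pi P) (Measure.pi Q) = ∏ i, (1 - sqHellinger (P i) (Q i)) := by
  have hP (i : ι) := absolutelyContinuous_add_self_left (P i) (Q i)
  have hQ (i : ι) := absolutelyContinuous_add_self_right (P i) (Q i)
  rw [one_sub_sqHellinger_eq_integral_of_ac (absolutelyContinuous_pi hP)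
    (absolutelyContinuous_pi hQ)]
  simp only [one_sub_sqHellinger_eq_integral]
  rw [← integral_fintype_prod_eq_prod fun i y =>
    sqrtDensity (P i) (P i + Q i) y * sqrtDensity (Q i) (P i + Q i) y]
  refine integral_congr_ae ?_
  filter_upwards [sqrtDensity_pi hP, sqrtDensity_pi hQ] with x hPx hQx
  rw [hPx, hQx, Finset.prod_mul_distrib]

end Pi

section LeCam

variable {X : Type*} [MeasurableSpace X] {P Q μ : Measure X}

lemma sq_integral_mul_le {f g : X → ℝ} (hf : MemLp f 2 μ) (hg : MemLp g 2 μ) :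
    (∫ x, f x * g x ∂μ) ^ 2 ≤ (∫ x, f x ^ 2 ∂μ) * ∫ x, g x ^ 2 ∂μ := by
  have inner_toLp {u v : X → ℝ} (hu : MemLp u 2 μ) (hv : MemLp v 2 μ) :
      inner ℝ (hu.toLp u) (hv.toLp v) = ∫ x, u x * v x ∂μ := by
    rw [L2.inner_def]
    refine integral_congr_ae ?_
    filter_upwards [hu.coeFn_toLp, hv.coeFn_toLp] with x hux hvx
    rw [hux, hvx, Real.inner_apply]
  simpa only [inner_toLp, ← sq] using real_inner_mul_inner_self_le (hf.toLp f) (hg.toLp g)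

lemma integral_sq_sqrtDensity_add_mul [IsProbabilityMeasure P] [IsProbabilityMeasure Q]
    [SigmaFinite μ] (hP : P ≪ μ) (hQ : Q ≪ μ) (c : ℝ) :
    ∫ x, (sqrtDensity P μ x + c * sqrtDensity Q μ x) ^ 2 ∂μ =
      1 + 2 * c * (1 - sqHellinger P Q) + c ^ 2 := by
  have integrable_sq : Integrable (fun x => sqrtDensity P μ x ^ 2) μ :=
    memLp_sqrtDensity.integrable_sq
  have integrable_cross :
      Integrable (fun x => 2 * c * (sqrtDensity P μ x * sqrtDensity Q μ x)) μ :=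
    (memLp_sqrtDensity.integrable_mul memLp_sqrtDensity).const_mul _
  have integrable_sq_add_cross : Integrable (fun x =>
      sqrtDensity P μ x ^ 2 + 2 * c * (sqrtDensity P μ x * sqrtDensity Q μ x)) μ :=
    integrable_sq.add integrable_cross
  have integrable_sq_right : Integrable (fun x => c ^ 2 * sqrtDensity Q μ x ^ 2) μ :=
    memLp_sqrtDensity.integrable_sq.const_mul _
  calc ∫ x, (sqrtDensity P μ x + c * sqrtDensity Q μ x) ^ 2 ∂μ
      = ∫ x, sqrtDensity P μ x ^ 2 + 2 * c * (sqrtDensity P μ x * sqrtDensity Q μ x)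
          + c ^ 2 * sqrtDensity Q μ x ^ 2 ∂μ := by
        congr 1 with x
        ring
    _ = 1 + 2 * c * (1 - sqHellinger P Q) + c ^ 2 := by
        rw [integral_add integrable_sq_add_cross integrable_sq_right,
          integral_add integrable_sq integrable_cross, integral_const_mul, integral_const_mul,
          integral_sqrtDensity_sq hP, integral_sqrtDensity_sq hQ,
          ← one_sub_sqHellinger_eq_integral_of_ac hP hQ, mul_one]

lemma integral_sq_sqrtDensity_sub [IsProbabilityMeasure P] [IsProbabilityMeasure Q]
    [SigmaFinite μ] (hP : P ≪ μ) (hQ : Q ≪ μ) :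
    ∫ x, (sqrtDensity P μ x - sqrtDensity Q μ x) ^ 2 ∂μ = 2 * sqHellinger P Q := by
  have h := integral_sq_sqrtDensity_add_mul hP hQ (-1)
  simp only [neg_one_mul, ← sub_eq_add_neg] at h
  linarith

lemma integral_sq_sqrtDensity_add [IsProbabilityMeasure P] [IsProbabilityMeasure Q]
    [SigmaFinite μ] (hP : P ≪ μ) (hQ : Q ≪ μ) :
    ∫ x, (sqrtDensity P μ x + sqrtDensity Q μ x) ^ 2 ∂μ = 2 * (2 - sqHellinger P Q) := by
  have h := integral_sq_sqrtDensity_add_mul hP hQ 1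
  simp only [one_mul] at h
  linarith

lemma integrable_sqrtDensity_sq_sub_sq_mul [SigmaFinite P] [SigmaFinite Q] [SigmaFinite μ]
    (hP : P ≪ μ) (hQ : Q ≪ μ) {T : X → ℝ} (hTP : Integrable T P) (hTQ : Integrable T Q) :
    Integrable (fun x => (sqrtDensity P μ x ^ 2 - sqrtDensity Q μ x ^ 2) * T x) μ := by
  simp only [sub_mul]
  exact (integrable_sqrtDensity_sq_mul hP hTP).sub (integrable_sqrtDensity_sq_mul hQ hTQ)

lemma integral_sub_integral_eq_integral_sqrtDensity [SigmaFinite P] [SigmaFinite Q]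
    [SigmaFinite μ] (hP : P ≪ μ) (hQ : Q ≪ μ) {T : X → ℝ}
    (hTP : Integrable T P) (hTQ : Integrable T Q) :
    ∫ x, T x ∂P - ∫ x, T x ∂Q =
      ∫ x, (sqrtDensity P μ x ^ 2 - sqrtDensity Q μ x ^ 2) * T x ∂μ := by
  simp only [sub_mul]
  rw [integral_sub (integrable_sqrtDensity_sq_mul hP hTP) (integrable_sqrtDensity_sq_mul hQ hTQ),
    integral_sqrtDensity_sq_mul hP, integral_sqrtDensity_sq_mul hQ]

lemma sq_integral_sub_integral_le_of_abs_le [IsProbabilityMeasure P] [IsProbabilityMeasure Q]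
    {S : X → ℝ} {c : ℝ} (hS : Measurable S) (hSc : ∀ x, |S x| ≤ c) :
    (∫ x, S x ∂P - ∫ x, S x ∂Q) ^ 2 ≤
      (2 * c) ^ 2 * (sqHellinger P Q * (2 - sqHellinger P Q)) := by
  have hP := absolutelyContinuous_add_self_left P Q
  have hQ := absolutelyContinuous_add_self_right P Q
  set u := sqrtDensity P (P + Q)
  set v := sqrtDensity Q (P + Q)
  have memLp_sub : MemLp (fun x => u x - v x) 2 (P + Q) := memLp_sqrtDensity.sub memLp_sqrtDensity
  have memLp_add : MemLp (fun x => u x + v x) 2 (P + Q) := memLp_sqrtDensity.add memLp_sqrtDensity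
  have memLp_add_mul : MemLp (fun x => (u x + v x) * S x) 2 (P + Q) :=
    memLp_add.of_le_mul (memLp_add.1.mul hS.aestronglyMeasurable) <| .of_forall fun x => by
      rw [norm_mul, mul_comm]
      exact mul_le_mul_of_nonneg_right (hSc x) (norm_nonneg _)
  have integrable_bounded (ν : Measure X) [IsFiniteMeasure ν] : Integrable S ν :=
    .of_bound hS.aestronglyMeasurable c (.of_forall hSc)
  calc (∫ x, S x ∂P - ∫ x, S x ∂Q) ^ 2
      = (∫ x, (u x - v x) * ((u x + v x) * S x) ∂(P + Q)) ^ 2 := by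
        rw [integral_sub_integral_eq_integral_sqrtDensity hP hQ (integrable_bounded P)
          (integrable_bounded Q)]
        congr 2 with x
        ring
    _ ≤ (∫ x, (u x - v x) ^ 2 ∂(P + Q)) * ∫ x, ((u x + v x) * S x) ^ 2 ∂(P + Q) :=
        sq_integral_mul_le memLp_sub memLp_add_mul
    _ ≤ (∫ x, (u x - v x) ^ 2 ∂(P + Q)) * ∫ x, c ^ 2 * (u x + v x) ^ 2 ∂(P + Q) := by
        gcongr ?_ * ?_
        refine integral_mono memLp_add_mul.integrable_sq (memLp_add.integrable_sq.const_mul _)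
          fun x => ?_
        rw [mul_pow, mul_comm]
        exact mul_le_mul_of_nonneg_right (sq_le_sq' (abs_le.mp (hSc x)).1 (abs_le.mp (hSc x)).2)
          (sq_nonneg _)
    _ = (2 * c) ^ 2 * (sqHellinger P Q * (2 - sqHellinger P Q)) := by
        rw [integral_const_mul, integral_sq_sqrtDensity_sub hP hQ,
          integral_sq_sqrtDensity_add hP hQ]
        ring

lemma sq_integral_sub_integral_le_of_mem_Icc [IsProbabilityMeasure P] [IsProbabilityMeasure Q]
    {T : X → ℝ} (hT : Measurable T) (hT01 : ∀ x, T x ∈ Set.Icc (0 : ℝ) 1) :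
    (∫ x, T x ∂P - ∫ x, T x ∂Q) ^ 2 ≤ sqHellinger P Q * (2 - sqHellinger P Q) := by
  have integral_centered (ν : Measure X) [IsProbabilityMeasure ν] :
      ∫ x, T x - 1 / 2 ∂ν = ∫ x, T x ∂ν - 1 / 2 := by
    rw [integral_sub (.of_mem_Icc 0 1 hT.aemeasurable (.of_forall hT01)) (integrable_const _)]
    simp only [integral_const, probReal_univ, one_smul]
  -- Centring `T` at `1 / 2` halves its sup norm, which turns the constant 4 into 1.
  have h := sq_integral_sub_integral_le_of_abs_le (P := P) (Q := Q) (c := 1 / 2)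
    (hT.sub_const (1 / 2)) fun x => abs_le.mpr ⟨by linarith [(hT01 x).1], by linarith [(hT01 x).2]⟩
  rw [integral_centered P, integral_centered Q, sub_sub_sub_cancel_right] at h
  linarith

lemma exists_sqHellinger_le_integral_sub_integral [IsProbabilityMeasure P] [IsFiniteMeasure Q] :
    ∃ T : X → ℝ, Measurable T ∧ (∀ x, T x ∈ Set.Icc (0 : ℝ) 1) ∧
      sqHellinger P Q ≤ ∫ x, T x ∂P - ∫ x, T x ∂Q := by
  have hP := absolutelyContinuous_add_self_left P Q
  have hQ := absolutelyContinuous_add_self_right P Q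
  set u := sqrtDensity P (P + Q)
  set v := sqrtDensity Q (P + Q)
  let T : X → ℝ := fun x => if v x ≤ u x then 1 else 0
  have hT : Measurable T :=
    .ite (measurableSet_le measurable_sqrtDensity measurable_sqrtDensity) measurable_const
      measurable_const
  have hT01 (x : X) : T x ∈ Set.Icc (0 : ℝ) 1 := by
    simp only [T]
    split_ifs <;> simp
  have integrable_test (ν : Measure X) [IsFiniteMeasure ν] : Integrable T ν :=
    .of_mem_Icc 0 1 hT.aemeasurable (.of_forall hT01)
  have integrable_sq : Integrable (fun x => u x ^ 2) (P + Q) := memLp_sqrtDensity.integrable_sq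
  have integrable_mul : Integrable (fun x => u x * v x) (P + Q) :=
    memLp_sqrtDensity.integrable_mul memLp_sqrtDensity
  have integrable_diff_mul : Integrable (fun x => (u x ^ 2 - v x ^ 2) * T x) (P + Q) :=
    integrable_sqrtDensity_sq_sub_sq_mul hP hQ (integrable_test P) (integrable_test Q)
  refine ⟨T, hT, hT01, ?_⟩
  calc sqHellinger P Q
      = ∫ x, u x ^ 2 - u x * v x ∂(P + Q) := by
        rw [integral_sub integrable_sq integrable_mul, integral_sqrtDensity_sq hP,
          ← one_sub_sqHellinger_eq_integral, sub_sub_cancel]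
    _ ≤ ∫ x, (u x ^ 2 - v x ^ 2) * T x ∂(P + Q) := by
        refine integral_mono (integrable_sq.sub integrable_mul) integrable_diff_mul fun x => ?_
        have hu : 0 ≤ u x := sqrtDensity_nonneg x
        have hv : 0 ≤ v x := sqrtDensity_nonneg x
        simp only [T]
        split_ifs with h <;> nlinarith
    _ = ∫ x, T x ∂P - ∫ x, T x ∂Q :=
        (integral_sub_integral_eq_integral_sqrtDensity hP hQ (integrable_test P)
          (integrable_test Q)).symm

end LeCam

section IID

variable {ι : Type*} [Fintype ι] {X : Type*} [MeasurableSpace X] {P Q : Measure X}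

lemma one_sub_sqHellinger_pi_const [IsFiniteMeasure P] [IsFiniteMeasure Q] :
    1 - sqHellinger (Measure.pi fun _ : ι => P) (Measure.pi fun _ : ι => Q) =
      (1 - sqHellinger P Q) ^ Fintype.card ι := by
  rw [one_sub_sqHellinger_pi, Finset.prod_const, Finset.card_univ]

lemma sqHellinger_pi_const_le [IsFiniteMeasure P] [IsFiniteMeasure Q] :
    sqHellinger (Measure.pi fun _ : ι => P) (Measure.pi fun _ : ι => Q) ≤
      Fintype.card ι * sqHellinger P Q := by
  have bernoulli := one_add_mul_le_pow (a := -sqHellinger P Q)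
    (by linarith [sqHellinger_le_one (P := P) (Q := Q)]) (Fintype.card ι)
  rw [← sub_eq_add_neg, ← one_sub_sqHellinger_pi_const] at bernoulli
  linarith

lemma one_sub_exp_le_sqHellinger_pi_const [IsFiniteMeasure P] [IsFiniteMeasure Q] :
    1 - Real.exp (-(Fintype.card ι * sqHellinger P Q)) ≤
      sqHellinger (Measure.pi fun _ : ι => P) (Measure.pi fun _ : ι => Q) := by
  rw [sub_le_comm, one_sub_sqHellinger_pi_const, ← mul_neg, Real.exp_nat_mul]
  exact pow_le_pow_left₀ (sub_nonneg.mpr sqHellinger_le_one) (Real.one_sub_le_exp_neg _) _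

lemma sq_integral_pi_sub_integral_pi_le [IsProbabilityMeasure P] [IsProbabilityMeasure Q]
    {T : (ι → X) → ℝ} (hT : Measurable T) (hT01 : ∀ x, T x ∈ Set.Icc (0 : ℝ) 1) :
    (∫ x, T x ∂(Measure.pi fun _ => P) - ∫ x, T x ∂(Measure.pi fun _ => Q)) ^ 2 ≤
      2 * (Fintype.card ι * sqHellinger P Q) := by
  set H := sqHellinger (Measure.pi fun _ : ι => P) (Measure.pi fun _ : ι => Q)
  calc (∫ x, T x ∂(Measure.pi fun _ => P) - ∫ x, T x ∂(Measure.pi fun _ => Q)) ^ 2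
      ≤ H * (2 - H) := sq_integral_sub_integral_le_of_mem_Icc hT hT01
    _ ≤ 2 * H := by linarith [sq_nonneg H]
    _ ≤ 2 * (Fintype.card ι * sqHellinger P Q) := by gcongr; exact sqHellinger_pi_const_le

lemma exists_le_integral_pi_sub_integral_pi [IsProbabilityMeasure P] [IsFiniteMeasure Q]
    {α : ℝ} (hα : α < 1) (h : Real.log (1 / (1 - α)) ≤ Fintype.card ι * sqHellinger P Q) :
    ∃ T : (ι → X) → ℝ, Measurable T ∧ (∀ x, T x ∈ Set.Icc (0 : ℝ) 1) ∧
      α ≤ ∫ x, T x ∂(Measure.pi fun _ => P) - ∫ x, T x ∂(Measure.pi fun _ => Q) := by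
  obtain ⟨T, hT, hT01, advantage⟩ := exists_sqHellinger_le_integral_sub_integral
    (P := Measure.pi fun _ : ι => P) (Q := Measure.pi fun _ : ι => Q)
  refine ⟨T, hT, hT01, ?_⟩
  calc α ≤ 1 - Real.exp (-(Fintype.card ι * sqHellinger P Q)) := by
        rw [le_sub_comm, ← Real.le_log_iff_exp_le (sub_pos.mpr hα)]
        rw [one_div, Real.log_inv] at h
        exact neg_le.mp h
    _ ≤ sqHellinger (Measure.pi fun _ : ι => P) (Measure.pi fun _ : ι => Q) :=
        one_sub_exp_le_sqHellinger_pi_const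
    _ ≤ _ := advantage

end IID

/-- For `α ∈ (0,1)` and `P0 ≠ P1` with `h = H²(P0,P1) ∈ (0,1)`, the optimal sample
complexity `M_α` (the least `n` for which some `[0,1]`-valued test on `n` i.i.d. samples
achieves advantage at least `α`) exists and satisfies
`(α²/2)·(1/h) ≤ M_α ≤ ⌈ln(1/(1-α))/h⌉`, i.e. `M_α = Θ(1/H²(P0,P1))`. -/
theorem sample_complexity_theta_inv_sq_hellinger
    {X : Type*} [MeasurableSpace X]
    (P0 P1 : Measure X) [IsProbabilityMeasure P0] [IsProbabilityMeasure P1]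
    (hne : P0 ≠ P1) (hh : sqHellinger P0 P1 ∈ Set.Ioo (0 : ℝ) 1)
    (α : ℝ) (hα : α ∈ Set.Ioo (0 : ℝ) 1) :
    ∃ M : ℕ, IsLeast {n : ℕ | ∃ T : (Fin n → X) → ℝ,
        Measurable T ∧ (∀ x, T x ∈ Set.Icc (0 : ℝ) 1) ∧
        α ≤ (∫ x, T x ∂(Measure.pi fun _ : Fin n => P0))
              - ∫ x, T x ∂(Measure.pi fun _ : Fin n => P1)} M ∧
      (α ^ 2 / 2) * (1 / sqHellinger P0 P1) ≤ (M : ℝ) ∧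
      (M : ℝ) ≤ (⌈Real.log (1 / (1 - α)) / sqHellinger P0 P1⌉₊ : ℝ) := by
  obtain ⟨hh0, -⟩ := hh
  set S := {n : ℕ | ∃ T : (Fin n → X) → ℝ,
    Measurable T ∧ (∀ x, T x ∈ Set.Icc (0 : ℝ) 1) ∧
    α ≤ (∫ x, T x ∂(Measure.pi fun _ : Fin n => P0))
          - ∫ x, T x ∂(Measure.pi fun _ : Fin n => P1)}
  have lower_bound {n : ℕ} (hn : n ∈ S) : (α ^ 2 / 2) * (1 / sqHellinger P0 P1) ≤ n := by
    obtain ⟨T, hT, hT01, advantage⟩ := hn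
    have h : α ^ 2 ≤ 2 * (n * sqHellinger P0 P1) := by
      simpa only [Fintype.card_fin] using
        (pow_le_pow_left₀ hα.1.le advantage 2).trans (sq_integral_pi_sub_integral_pi_le hT hT01)
    rw [mul_one_div, div_le_iff₀ hh0]
    linarith
  have ceil_mem : ⌈Real.log (1 / (1 - α)) / sqHellinger P0 P1⌉₊ ∈ S := by
    refine exists_le_integral_pi_sub_integral_pi hα.2 ?_
    rw [Fintype.card_fin, ← div_le_iff₀ hh0]
    exact Nat.le_ceil _
  have sInf_mem : sInf S ∈ S := Nat.sInf_mem ⟨_, ceil_mem⟩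
  exact ⟨sInf S, ⟨sInf_mem, fun _ hn => Nat.sInf_le hn⟩, lower_bound sInf_mem,
    Nat.cast_le.mpr (Nat.sInf_le ceil_mem)⟩
end

section
/- Let p, q ∈ [0,1] with p ≥ q, where p = P_in(E) and q = P_out(E) are the probabilities that a model predicts label y on input x when trained with and without the sample z = (x,y), so that the memorization score is mem = p − q > 0. For any α ∈ (0,1) and any measurable test T : {0,1}^n → [0,1] distinguishing Bernoulli(q)^⊗n from Bernoulli(p)^⊗n (the n shadow-model indicator observations in the 'out' and 'in' cases) with advantage ∫ T d(Bernoulli(q))^⊗n − ∫ T d(Bernoulli(p))^⊗n ≥ α, it must hold that n ≥ α² / (2 · mem). That is, the number of shadow models needed to achieve a fixed advantage is inversely proportional to the memorization score of the challenge sample. -/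
/-!
Thresholding a uniform `u ∈ [0, 1]` at `p` and at `q` couples `Bernoulli(p)` and `Bernoulli(q)` so
that they disagree with probability `|p - q|`. With independent `u` in the `n` coordinates, the two
samples differ with probability at most `n |p - q|` by a union bound, and the advantage `α` of a
test cannot exceed that probability. Since `0 < α < 1`, the bound `α ≤ n (p - q)` is stronger than
the quadratic `α² ≤ 2 n (p - q)`.
-/

open MeasureTheory

/-- The Bernoulli measure on `{0,1}` (modelled as `Bool`): mass `p` at `true` and
`1 - p` at `false`. -/
noncomputable def bern (p : ℝ) : Measure Bool :=
  ENNReal.ofReal p • Measure.dirac true + ENNReal.ofReal (1 - p) • Measure.dirac false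

open scoped unitInterval

section Coupling

lemma integral_sub_integral_le_measureReal_ne {Ω X : Type*} [MeasurableSpace Ω]
    [MeasurableSpace X] {P : Measure Ω} [IsFiniteMeasure P] {μ ν : Measure X} {f g : Ω → X}
    (hf : MeasurePreserving f P μ) (hg : MeasurePreserving g P ν)
    {T : X → ℝ} (hT : Measurable T) (hT01 : ∀ x, T x ∈ Set.Icc (0 : ℝ) 1) :
    ∫ x, T x ∂μ - ∫ x, T x ∂ν ≤ P.real {ω | f ω ≠ g ω} := by
  -- The disagreement set itself can fail to be measurable, as the diagonal of `X` can.
  set D := toMeasurable P {ω | f ω ≠ g ω} with hD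
  have hDm : MeasurableSet D := measurableSet_toMeasurable _ _
  have integrable_comp {h : Ω → X} (hh : Measurable h) : Integrable (fun ω ↦ T (h ω)) P :=
    .of_mem_Icc 0 1 (hT.comp hh).aemeasurable (.of_forall fun ω ↦ hT01 (h ω))
  have le_indicator (ω : Ω) : T (f ω) - T (g ω) ≤ D.indicator 1 ω := by
    by_cases hω : f ω = g ω
    · rw [hω, sub_self]
      exact Set.indicator_nonneg (fun _ _ ↦ zero_le_one) ω
    · rw [Set.indicator_of_mem (subset_toMeasurable _ _ hω), Pi.one_apply]
      linarith [(hT01 (f ω)).2, (hT01 (g ω)).1]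
  calc ∫ x, T x ∂μ - ∫ x, T x ∂ν
      = ∫ ω, T (f ω) ∂P - ∫ ω, T (g ω) ∂P := by
        rw [← hf.map_eq, ← hg.map_eq,
          integral_map hf.aemeasurable hT.aestronglyMeasurable,
          integral_map hg.aemeasurable hT.aestronglyMeasurable]
    _ = ∫ ω, (T (f ω) - T (g ω)) ∂P :=
        (integral_sub (integrable_comp hf.measurable) (integrable_comp hg.measurable)).symm
    _ ≤ ∫ ω, D.indicator 1 ω ∂P :=
        integral_mono ((integrable_comp hf.measurable).sub (integrable_comp hg.measurable))
          ((integrable_const 1).indicator hDm) le_indicator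
    _ = P.real {ω | f ω ≠ g ω} := by
        rw [integral_indicator_one hDm, hD, measureReal_def, measure_toMeasurable, measureReal_def]

variable {ι : Type*} [Fintype ι] {Ω X : ι → Type*} [∀ i, MeasurableSpace (Ω i)]
  {P : ∀ i, Measure (Ω i)} [∀ i, IsProbabilityMeasure (P i)]

lemma measureReal_pi_ne_le_sum (f g : ∀ i, Ω i → X i) :
    (Measure.pi P).real {ω | (fun i ↦ f i (ω i)) ≠ fun i ↦ g i (ω i)} ≤
      ∑ i, (P i).real {ω | f i ω ≠ g i ω} := by
  have coordinate_le (i : ι) : (Measure.pi P).real (Function.eval i ⁻¹' {ω | f i ω ≠ g i ω}) ≤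
      (P i).real {ω | f i ω ≠ g i ω} :=
    ENNReal.toReal_mono (measure_ne_top _ _)
      ((measurePreserving_eval P i).measure_preimage_le _)
  calc (Measure.pi P).real {ω | (fun i ↦ f i (ω i)) ≠ fun i ↦ g i (ω i)}
      = (Measure.pi P).real (⋃ i, Function.eval i ⁻¹' {ω | f i ω ≠ g i ω}) := by
        congr 1
        ext ω
        simp [funext_iff]
    _ ≤ ∑ i, (Measure.pi P).real (Function.eval i ⁻¹' {ω | f i ω ≠ g i ω}) :=
        measureReal_iUnion_fintype_le _
    _ ≤ ∑ i, (P i).real {ω | f i ω ≠ g i ω} := Finset.sum_le_sum fun i _ ↦ coordinate_le i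

lemma integral_pi_sub_integral_pi_le_sum_measureReal_ne [∀ i, MeasurableSpace (X i)]
    {μ ν : ∀ i, Measure (X i)} {f g : ∀ i, Ω i → X i}
    (hf : ∀ i, MeasurePreserving (f i) (P i) (μ i))
    (hg : ∀ i, MeasurePreserving (g i) (P i) (ν i))
    {T : (∀ i, X i) → ℝ} (hT : Measurable T) (hT01 : ∀ x, T x ∈ Set.Icc (0 : ℝ) 1) :
    ∫ x, T x ∂(Measure.pi μ) - ∫ x, T x ∂(Measure.pi ν) ≤
      ∑ i, (P i).real {ω | f i ω ≠ g i ω} := by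
  have (i : ι) : IsProbabilityMeasure (μ i) :=
    (hf i).map_eq ▸ Measure.isProbabilityMeasure_map (hf i).aemeasurable
  have (i : ι) : IsProbabilityMeasure (ν i) :=
    (hg i).map_eq ▸ Measure.isProbabilityMeasure_map (hg i).aemeasurable
  exact (integral_sub_integral_le_measureReal_ne (measurePreserving_pi P μ hf)
    (measurePreserving_pi P ν hg) hT hT01).trans (measureReal_pi_ne_le_sum f g)

end Coupling

section Bernoulli

lemma measurePreserving_decide_le_bern (p : I) :
    MeasurePreserving (fun u : I ↦ decide (u ≤ p)) volume (bern p) := by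
  have preimage_true : (fun u : I ↦ decide (u ≤ p)) ⁻¹' {true} = Set.Iic p := by ext u; simp
  have preimage_false : (fun u : I ↦ decide (u ≤ p)) ⁻¹' {false} = Set.Ioi p := by ext u; simp
  have measurable_threshold : Measurable fun u : I ↦ decide (u ≤ p) :=
    measurable_to_bool (preimage_true ▸ measurableSet_Iic)
  refine ⟨measurable_threshold, Measure.ext_of_singleton fun b ↦ ?_⟩
  rw [Measure.map_apply measurable_threshold (measurableSet_singleton b)]
  cases b
  · rw [preimage_false, unitInterval.volume_Ioi]
    simp [bern]
  · rw [preimage_true, unitInterval.volume_Iic]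
    simp [bern]

lemma volume_real_decide_le_ne (p q : I) :
    (volume : Measure I).real {u | decide (u ≤ p) ≠ decide (u ≤ q)} = |(p : ℝ) - q| := by
  have disagreement_eq : {u : I | decide (u ≤ p) ≠ decide (u ≤ q)} = Set.uIoc p q := by
    ext u
    simp only [ne_eq, decide_eq_decide, Set.mem_ofPred_eq, Set.mem_uIoc]
    grind
  rw [disagreement_eq, measureReal_def, unitInterval.volume_uIoc, edist_comm, edist_dist,
    ENNReal.toReal_ofReal dist_nonneg, Subtype.dist_eq, Real.dist_eq]

lemma integral_pi_bern_sub_integral_pi_bern_le {ι : Type*} [Fintype ι] (p q : ι → I)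
    {T : (ι → Bool) → ℝ} (hT01 : ∀ x, T x ∈ Set.Icc (0 : ℝ) 1) :
    ∫ x, T x ∂(Measure.pi fun i ↦ bern (p i)) - ∫ x, T x ∂(Measure.pi fun i ↦ bern (q i)) ≤
      ∑ i, |(p i : ℝ) - q i| := by
  simpa only [volume_real_decide_le_ne] using
    integral_pi_sub_integral_pi_le_sum_measureReal_ne
      (fun i ↦ measurePreserving_decide_le_bern (p i))
      (fun i ↦ measurePreserving_decide_le_bern (q i)) (measurable_of_finite T) hT01

end Bernoulli

/-- With `p = P_in(E)` and `q = P_out(E)` and memorization score `mem = p - q > 0`, any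
test on `n` shadow-model indicator observations that distinguishes `Bernoulli(q)^⊗n`
(the 'out' case) from `Bernoulli(p)^⊗n` (the 'in' case) with advantage at least `α`
requires `n ≥ α² / (2·mem)` shadow models. -/
theorem shadow_models_ge_inv_mem
    {Θ : Type*} [MeasurableSpace Θ]
    (Pin Pout : Measure Θ) [IsProbabilityMeasure Pin] [IsProbabilityMeasure Pout]
    (E : Set Θ) (hE : MeasurableSet E)
    (p q : ℝ) (hp : p = (Pin E).toReal) (hq : q = (Pout E).toReal)
    (hqp : q ≤ p) (hmem : 0 < p - q)
    (α : ℝ) (hα : α ∈ Set.Ioo (0 : ℝ) 1)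
    (n : ℕ)
    (T : (Fin n → Bool) → ℝ) (hTm : Measurable T) (hT01 : ∀ x, T x ∈ Set.Icc (0 : ℝ) 1)
    (hadv : α ≤ (∫ x, T x ∂(Measure.pi fun _ : Fin n => bern q))
        - ∫ x, T x ∂(Measure.pi fun _ : Fin n => bern p)) :
    α ^ 2 / (2 * (p - q)) ≤ (n : ℝ) := by
  have hp01 : p ∈ I := ⟨hp ▸ ENNReal.toReal_nonneg, hp ▸ (measureReal_le_one : Pin.real E ≤ 1)⟩
  have hq01 : q ∈ I := ⟨hq ▸ ENNReal.toReal_nonneg, hqp.trans hp01.2⟩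
  have advantage_le : α ≤ n * (p - q) := by
    simpa [mul_sub, abs_sub_comm q p, abs_of_pos hmem] using hadv.trans
      (integral_pi_bern_sub_integral_pi_bern_le (fun _ ↦ ⟨q, hq01⟩) (fun _ ↦ ⟨p, hp01⟩) hT01)
  have sq_le : α ^ 2 ≤ α := pow_le_of_le_one hα.1.le hα.2.le two_ne_zero
  rw [div_le_iff₀ (mul_pos two_pos hmem)]
  linarith [hα.1]
end
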